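/- Let S be the Motzkin monoid M_n or the Jones monoid J_n, let k be a field and ξ ∈ k ∖ {0}. Then the twisted variant satisfies S^ξ = {1} ∪ {ξ^i·α : i ∈ ℕ, α ∈ S ∖ {1}}. -/

import Mathlib

open Relation

/-! ### The partition monoid and its planar submonoids -/

/-- Vertices of a partition diagram: `Sum.inl i` is the upper vertex `i`,
`Sum.inr i` is the lower vertex `i′`. -/
abbrev PV (n : ℕ) := Fin n ⊕ Fin n

/-- An element of the partition monoid `P_n`: a set partition of the `2n` vertices,
encoded as an equivalence relation (setoid). -/
abbrev PElt (n : ℕ) := Setoid (PV n)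

/-- Three layers of vertices, used to form products. -/
abbrev TV (n : ℕ) := Fin n ⊕ (Fin n ⊕ Fin n)

/-- Embedding of the vertices of the upper factor into the three layers. -/
def upEmb {n : ℕ} : PV n → TV n
  | .inl i => .inl i
  | .inr i => .inr (.inl i)

/-- Embedding of the vertices of the lower factor into the three layers. -/
def downEmb {n : ℕ} : PV n → TV n
  | .inl i => .inr (.inl i)
  | .inr i => .inr (.inr i)

/-- Embedding of the vertices of the product into the three layers. -/
def outEmb {n : ℕ} : PV n → TV n
  | .inl i => .inl i
  | .inr i => .inr (.inr i)

/-- The stacked graph of `a` on `b`: relations of `a` on layers 1–2 together with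
relations of `b` on layers 2–3. -/
def stackRel {n : ℕ} (a b : PElt n) : TV n → TV n → Prop := fun x y =>
  (∃ p q : PV n, a.r p q ∧ x = upEmb p ∧ y = upEmb q) ∨
  (∃ p q : PV n, b.r p q ∧ x = downEmb p ∧ y = downEmb q)

/-- The finest common coarsening (transitive closure) of the stacked graph. -/
def stackSetoid {n : ℕ} (a b : PElt n) : Setoid (TV n) :=
  EqvGen.setoid (stackRel a b)

/-- The product in the partition monoid: restrict the coarsening of the stacked graph
to the outer two layers. -/
def pmul {n : ℕ} (a b : PElt n) : PElt n :=
  Setoid.comap outEmb (stackSetoid a b)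

/-- The identity of the partition monoid: blocks `{i, i′}`. -/
def pid (n : ℕ) : PElt n :=
  ⟨fun x y => Sum.elim id id x = Sum.elim id id y,
    ⟨fun _ => rfl, fun h => h.symm, fun h₁ h₂ => h₁.trans h₂⟩⟩

/-- A vertex of the triple-layer graph lies in the identified middle row. -/
def isMiddle {n : ℕ} : TV n → Prop
  | .inr (.inl _) => True
  | _ => False

/-- `m(a,b)`: the number of floating components (components of the stacked graph of `a` on `b`
contained entirely in the identified middle row). -/
noncomputable def floatCount {n : ℕ} (a b : PElt n) : ℕ :=
  Nat.card {c : Quotient (stackSetoid a b) //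
    ∀ x : TV n, Quotient.mk (stackSetoid a b) x = c → isMiddle x}

/-- A block (equivalence class) is a transversal if it contains both an upper
and a lower vertex. -/
def IsTransClass {n : ℕ} (a : PElt n) (c : Quotient a) : Prop :=
  (∃ i : Fin n, Quotient.mk a (.inl i) = c) ∧ (∃ j : Fin n, Quotient.mk a (.inr j) = c)

/-- The rank of a partition: the number of transversal blocks. -/
noncomputable def prank {n : ℕ} (a : PElt n) : ℕ :=
  Nat.card {c : Quotient a // IsTransClass a c}

/-- Position of a vertex in the boundary order `1, …, n, n′, …, 1′` of the rectangle. -/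
def ordIdx (n : ℕ) : PV n → ℕ
  | .inl i => i.val
  | .inr i => 2 * n - 1 - i.val

/-- Planarity: the partition is non-crossing with respect to the boundary order
`1 < ⋯ < n < n′ < ⋯ < 1′`. -/
def IsPlanar {n : ℕ} (a : PElt n) : Prop :=
  ¬ ∃ w x y z : PV n, ordIdx n w < ordIdx n x ∧ ordIdx n x < ordIdx n y ∧
      ordIdx n y < ordIdx n z ∧ a.r w y ∧ a.r x z ∧ ¬ a.r w x

/-- The size of the block containing a given vertex. -/
noncomputable def blockCard {n : ℕ} (a : PElt n) (x : PV n) : ℕ :=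
  Nat.card {y : PV n // a.r x y}

/-- The Motzkin monoid: planar partitions with all blocks of size at most 2. -/
def Motzkin (n : ℕ) : Set (PElt n) :=
  {a | IsPlanar a ∧ ∀ x : PV n, blockCard a x ≤ 2}

/-- The Jones (Temperley–Lieb) monoid: planar partitions with all blocks of size
exactly 2. -/
def Jones (n : ℕ) : Set (PElt n) :=
  {a | IsPlanar a ∧ ∀ x : PV n, blockCard a x = 2}

/-! ### The interface graph -/

/-- Lower edge of the interface graph `Γ(a)`: a block `{i,j}` of `a` on upper vertices. -/
def LowEdge {n : ℕ} (a : PElt n) (i j : Fin n) : Prop :=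
  i ≠ j ∧ a.r (.inl i) (.inl j)

/-- Upper edge of the interface graph `Γ(a)`: a block `{i′,j′}` of `a` on lower vertices. -/
def UpEdge {n : ℕ} (a : PElt n) (i j : Fin n) : Prop :=
  i ≠ j ∧ a.r (.inr i) (.inr j)

/-- Vertex `i` of `Γ(a)` carries a lower edge. -/
def hasLow {n : ℕ} (a : PElt n) (i : Fin n) : Prop := ∃ j, LowEdge a i j

/-- Vertex `i` of `Γ(a)` carries an upper edge. -/
def hasUp {n : ℕ} (a : PElt n) (i : Fin n) : Prop := ∃ j, UpEdge a i j

/-- Vertex `i` is active downwards: the upper vertex `i` lies in a transversal of `a`. -/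
def activeDown {n : ℕ} (a : PElt n) (i : Fin n) : Prop := ∃ j : Fin n, a.r (.inl i) (.inr j)

/-- Vertex `i` is active upwards: the lower vertex `i′` lies in a transversal of `a`. -/
def activeUp {n : ℕ} (a : PElt n) (i : Fin n) : Prop := ∃ j : Fin n, a.r (.inr i) (.inl j)

/-- Vertex `i` is inert downwards: the upper vertex `i` is a singleton block of `a`. -/
def inertDown {n : ℕ} (a : PElt n) (i : Fin n) : Prop := ∀ y, a.r (.inl i) y → y = .inl i

/-- Vertex `i` is inert upwards: the lower vertex `i′` is a singleton block of `a`. -/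
def inertUp {n : ℕ} (a : PElt n) (i : Fin n) : Prop := ∀ y, a.r (.inr i) y → y = .inr i

/-- Adjacency in the interface graph `Γ(a)`. -/
def gedge {n : ℕ} (a : PElt n) (i j : Fin n) : Prop := LowEdge a i j ∨ UpEdge a i j

/-- Connectivity in the interface graph `Γ(a)`. -/
def gconn {n : ℕ} (a : PElt n) : Fin n → Fin n → Prop := EqvGen (gedge a)

/-- `θ` is (the vertex set of) a connected component of `Γ(a)`. -/
def IsComp {n : ℕ} (a : PElt n) (θ : Set (Fin n)) : Prop :=
  θ.Nonempty ∧ ∀ i ∈ θ, ∀ j : Fin n, (gconn a i j ↔ j ∈ θ)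

/-- `θ` is a cycle component of `Γ(a)`: every vertex carries both a lower and an upper edge. -/
def IsCycleComp {n : ℕ} (a : PElt n) (θ : Set (Fin n)) : Prop :=
  IsComp a θ ∧ ∀ i ∈ θ, hasLow a i ∧ hasUp a i

/-- `θ` is a path component of `Γ(a)`: some vertex misses an edge on some side. -/
def IsPathComp {n : ℕ} (a : PElt n) (θ : Set (Fin n)) : Prop :=
  IsComp a θ ∧ ∃ i ∈ θ, ¬ hasLow a i ∨ ¬ hasUp a i

/-- An inert path: every terminus is inert on its free side. -/
def IsInertPathComp {n : ℕ} (a : PElt n) (θ : Set (Fin n)) : Prop :=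
  IsPathComp a θ ∧ ∀ i ∈ θ,
    (¬ hasLow a i → inertDown a i) ∧ (¬ hasUp a i → inertUp a i)

/-- A trans-active path: even length (its two free ends lie on opposite sides) with
both termini active on their free sides. -/
def IsTransActivePathComp {n : ℕ} (a : PElt n) (θ : Set (Fin n)) : Prop :=
  IsPathComp a θ ∧
  (∃! i : Fin n, i ∈ θ ∧ ¬ hasLow a i) ∧ (∃! i : Fin n, i ∈ θ ∧ ¬ hasUp a i) ∧
  ∀ i ∈ θ, (¬ hasLow a i → activeDown a i) ∧ (¬ hasUp a i → activeUp a i)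

/-- The number of edges of `Γ(a)` contained in `θ` (its length, for a component `θ`). -/
noncomputable def compEdgeCount {n : ℕ} (a : PElt n) (θ : Set (Fin n)) : ℕ :=
  Nat.card {p : Fin n × Fin n // p.1 < p.2 ∧ p.1 ∈ θ ∧ p.2 ∈ θ ∧ LowEdge a p.1 p.2} +
  Nat.card {p : Fin n × Fin n // p.1 < p.2 ∧ p.1 ∈ θ ∧ p.2 ∈ θ ∧ UpEdge a p.1 p.2}

/-! ### The map `α ↦ α̂` and the sets `D`, `Θ(δ)` -/

/-- The 0-based position of `i` among the upward-active vertices. -/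
noncomputable def posUp {n : ℕ} (a : PElt n) (i : Fin n) : ℕ :=
  Nat.card {j : Fin n // j < i ∧ activeUp a j}

/-- The 0-based position of `i` among the downward-active vertices. -/
noncomputable def posDown {n : ℕ} (a : PElt n) (i : Fin n) : ℕ :=
  Nat.card {j : Fin n // j < i ∧ activeDown a j}

/-- `i` and `j` are consecutive upward-active vertices paired in forming `α̂`
(`i` in an even position `2t`, `j` in position `2t+1 < 2⌊r/2⌋`). -/
noncomputable def pairedUp {n : ℕ} (a : PElt n) (i j : Fin n) : Prop :=
  activeUp a i ∧ activeUp a j ∧ Even (posUp a i) ∧ posUp a j = posUp a i + 1 ∧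
    posUp a j < 2 * (prank a / 2)

/-- `i` and `j` are consecutive downward-active vertices paired in forming `α̂`. -/
noncomputable def pairedDown {n : ℕ} (a : PElt n) (i j : Fin n) : Prop :=
  activeDown a i ∧ activeDown a j ∧ Even (posDown a i) ∧ posDown a j = posDown a i + 1 ∧
    posDown a j < 2 * (prank a / 2)

/-- The transversal relations removed in forming `α̂` (those of the first `2⌊r/2⌋`
transversals). -/
noncomputable def removedTrans {n : ℕ} (a : PElt n) (x y : PV n) : Prop :=
  ∃ i j : Fin n, a.r (.inl i) (.inr j) ∧ posDown a i < 2 * (prank a / 2) ∧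
    ((x = .inl i ∧ y = .inr j) ∨ (x = .inr j ∧ y = .inl i))

/-- The generating relation of `α̂`: the relations of `α` minus the removed transversals,
plus the new blocks pairing consecutive active vertices. -/
noncomputable def hatRel {n : ℕ} (a : PElt n) (x y : PV n) : Prop :=
  (a.r x y ∧ ¬ removedTrans a x y) ∨
  (∃ i j : Fin n, pairedUp a i j ∧
      ((x = .inr i ∧ y = .inr j) ∨ (x = .inr j ∧ y = .inr i))) ∨
  (∃ i j : Fin n, pairedDown a i j ∧
      ((x = .inl i ∧ y = .inl j) ∨ (x = .inl j ∧ y = .inl i)))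

/-- The element `α̂` obtained from `α` by pairing off consecutive active vertices. -/
noncomputable def hat {n : ℕ} (a : PElt n) : PElt n := EqvGen.setoid (hatRel a)

/-- The idempotents of a subset `S` (with respect to the partition product). -/
def Eset {n : ℕ} (S : Set (PElt n)) : Set (PElt n) := {a ∈ S | pmul a a = a}

/-- `D(S) = D₀ ∪ E(D₁)`: the idempotents of `S` of rank at most 1. -/
def Dset {n : ℕ} (S : Set (PElt n)) : Set (PElt n) :=
  {d ∈ S | pmul d d = d ∧ prank d ≤ 1}

/-- `θ` lies (entirely) to the left of the leftmost transversal of `a`. -/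
def LeftOfTrans {n : ℕ} (a : PElt n) (θ : Set (Fin n)) : Prop :=
  ∀ i ∈ θ, ∀ j : Fin n, activeDown a j ∨ activeUp a j → i < j

/-- `Θ(a)`: the cycle components of `Γ(a)` lying entirely to the left of the leftmost
transversal. -/
def ThetaSet {n : ℕ} (a : PElt n) : Set (Set (Fin n)) :=
  {θ | IsCycleComp a θ ∧ LeftOfTrans a θ}

/-! ### Returns, special pairs and `θ`-covers -/

/-- The block `{i,j}` of `a` on upper vertices is an upper return: no upper block
`{k,l}` has `k<i<j<l`, and no transversal contains an upper vertex smaller than `i`. -/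
def UpperReturn {n : ℕ} (a : PElt n) (i j : Fin n) : Prop :=
  i < j ∧ a.r (.inl i) (.inl j) ∧
  (¬ ∃ k l : Fin n, k < i ∧ j < l ∧ a.r (.inl k) (.inl l)) ∧
  (¬ ∃ k : Fin n, k < i ∧ activeDown a k)

/-- The block `{i′,j′}` of `a` on lower vertices is a lower return. -/
def LowerReturn {n : ℕ} (a : PElt n) (i j : Fin n) : Prop :=
  i < j ∧ a.r (.inr i) (.inr j) ∧
  (¬ ∃ k l : Fin n, k < i ∧ j < l ∧ a.r (.inr k) (.inr l)) ∧
  (¬ ∃ k : Fin n, k < i ∧ activeUp a k)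

/-- The interface-graph adjacency of `a` after deleting the lower-vertex block `{i′,j′}`
and the upper-vertex block `{k,l}`. -/
def redEdge {n : ℕ} (a : PElt n) (i j k l : Fin n) (u v : Fin n) : Prop :=
  (LowEdge a u v ∧ ({u, v} : Set (Fin n)) ≠ {k, l}) ∨
  (UpEdge a u v ∧ ({u, v} : Set (Fin n)) ≠ {i, j})

/-- The relation generating the `θ`-cover `a − (e′,f)`, for `e′ = {i′,j′}` and
`f = {k,l}`: delete the two blocks, and join each freed upper vertex to the freed lower
vertex reached along its path. -/
def coverRel {n : ℕ} (a : PElt n) (i j k l : Fin n) (x y : PV n) : Prop :=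
  (a.r x y ∧ ({x, y} : Set (PV n)) ≠ {.inl k, .inl l} ∧
    ({x, y} : Set (PV n)) ≠ {.inr i, .inr j}) ∨
  (∃ u v : Fin n, u ∈ ({k, l} : Set (Fin n)) ∧ v ∈ ({i, j} : Set (Fin n)) ∧
    EqvGen (redEdge a i j k l) u v ∧
    ((x = .inl u ∧ y = .inr v) ∨ (x = .inr v ∧ y = .inl u)))

/-- The `θ`-cover `a − (e′,f)` as a partition. -/
def coverElt {n : ℕ} (a : PElt n) (i j k l : Fin n) : PElt n :=
  EqvGen.setoid (coverRel a i j k l)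

/-- `b` is a `θ`-cover of `a`: `θ ∈ Θ(a)` and `b = a − (e′,f)` for some special pair
`(e′,f)` over `θ` (one lower-return and one upper-return edge of `θ`). -/
def IsThetaCover {n : ℕ} (a : PElt n) (θ : Set (Fin n)) (b : PElt n) : Prop :=
  θ ∈ ThetaSet a ∧
  ∃ i j k l : Fin n, i ∈ θ ∧ j ∈ θ ∧ k ∈ θ ∧ l ∈ θ ∧
    LowerReturn a i j ∧ UpperReturn a k l ∧ b = coverElt a i j k l

/-- `a ≪_d b`: `a = b` or there is a chain of `θ`-covers from `a` to `b` along pairwise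
distinct cycles `θ ∈ Θ(d)`. -/
def llRel {n : ℕ} (d : PElt n) (a b : PElt n) : Prop :=
  a = b ∨ ∃ (h : ℕ) (θs : Fin h → Set (Fin n)) (as : Fin (h + 1) → PElt n),
    Function.Injective θs ∧ (∀ ι, θs ι ∈ ThetaSet d) ∧
    as 0 = a ∧ as (Fin.last h) = b ∧
    ∀ ι : Fin h, IsThetaCover (as ι.castSucc) (θs ι) (as ι.succ)

/-- The fibre `F_d = {α ∈ E(S) : α̂ = d}`. -/
def Fib {n : ℕ} (S : Set (PElt n)) (d : PElt n) : Set (PElt n) :=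
  {a ∈ Eset S | hat a = d}

/-- `C_d(θ) = C*_d(θ) ∪ {d}`, where `C*_d(θ)` is the set of `θ`-covers of `d`. -/
def CoverSet {n : ℕ} (d : PElt n) (θ : Set (Fin n)) : Set (PElt n) :=
  insert d {b | IsThetaCover d θ b}

/-- `u_θ`: the number of upper-return blocks among the edges of `θ`. -/
noncomputable def uRet {n : ℕ} (a : PElt n) (θ : Set (Fin n)) : ℕ :=
  Nat.card {p : Fin n × Fin n // p.1 ∈ θ ∧ p.2 ∈ θ ∧ UpperReturn a p.1 p.2}

/-- `l_θ`: the number of lower-return blocks among the edges of `θ`. -/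
noncomputable def lRet {n : ℕ} (a : PElt n) (θ : Set (Fin n)) : ℕ :=
  Nat.card {p : Fin n × Fin n // p.1 ∈ θ ∧ p.2 ∈ θ ∧ LowerReturn a p.1 p.2}

/-! ### Twisted semigroup algebras -/

variable {K : Type} [Field K]

/-- The underlying vector space of the semigroup algebra `k[P_n]`. -/
abbrev PAlg (n : ℕ) (K : Type) [Field K] := PElt n →₀ K

/-- The twisted multiplication on `k[P_n]`: on basis elements,
`a ∘ b = ξ^{m(a,b)} · (ab)`, extended bilinearly. -/
noncomputable def twistMul {n : ℕ} (ξ : K) (f g : PAlg n K) : PAlg n K :=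
  f.sum fun a ca => g.sum fun b cb =>
    Finsupp.single (pmul a b) (ca * cb * ξ ^ floatCount a b)

/-- The twisted variant `S^ξ`: the subsemigroup of `(k[S], ∘)` generated by (the basis
elements corresponding to) `S`. -/
def TwistedVariant {n : ℕ} (ξ : K) (S : Set (PElt n)) : Set (PAlg n K) :=
  ⋂₀ {T : Set (PAlg n K) | (∀ a ∈ S, Finsupp.single a (1 : K) ∈ T) ∧
      ∀ f ∈ T, ∀ g ∈ T, twistMul ξ f g ∈ T}

/-- The idempotents of a set of elements of the twisted algebra. -/
def EsetTwist {n : ℕ} (ξ : K) (X : Set (PAlg n K)) : Set (PAlg n K) :=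
  {f ∈ X | twistMul ξ f f = f}

/-- `⟨S^ξ, ξ·1⟩ = {ξ^i·α : i ∈ ℕ, α ∈ S}`. -/
def TwistNat {n : ℕ} (ξ : K) (S : Set (PElt n)) : Set (PAlg n K) :=
  {f | ∃ (i : ℕ), ∃ a ∈ S, f = Finsupp.single a (ξ ^ i)}

/-- `⟨S^ξ, ξ·1, ξ⁻¹·1⟩ = {ξ^i·α : i ∈ ℤ, α ∈ S}`. -/
def TwistInt {n : ℕ} (ξ : K) (S : Set (PElt n)) : Set (PAlg n K) :=
  {f | ∃ (i : ℤ), ∃ a ∈ S, f = Finsupp.single a (ξ ^ i)}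

/-! ### Idempotent statistics of the Jones monoid -/

/-- The number of cycle components of `Γ(a)`. -/
noncomputable def numCycles {n : ℕ} (a : PElt n) : ℕ :=
  Nat.card {θ : Set (Fin n) // IsCycleComp a θ}

/-- The number of path components of `Γ(a)`. -/
noncomputable def numPaths {n : ℕ} (a : PElt n) : ℕ :=
  Nat.card {θ : Set (Fin n) // IsPathComp a θ}

/-- `E_{n;c,p}`: the idempotents of the Jones monoid `J_n` with `c` cycle components and
`p` path components (out-of-range indices give the empty set). -/
def EJcp (n : ℕ) (c p : ℤ) : Set (PElt n) :=
  {a ∈ Jones n | pmul a a = a ∧ (numCycles a : ℤ) = c ∧ (numPaths a : ℤ) = p}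

/-- `e_{n;c,p} = |E_{n;c,p}|`. -/
noncomputable def eJ (n : ℕ) (c p : ℤ) : ℕ := Nat.card (EJcp n c p)

/-- `e_{n;·,p} = Σ_c e_{n;c,p}`: the number of idempotents of `J_n` of rank `p`. -/
noncomputable def eJdot (n : ℕ) (p : ℤ) : ℕ :=
  Nat.card {a : PElt n | a ∈ Jones n ∧ pmul a a = a ∧ (numPaths a : ℤ) = p}

/-- `S^{(1)}_{n;c,p} = Σ_{α ∈ E_{n;c,p}} Σ_{θ ∈ Θ(α)} (u_θ + l_θ)`. -/
noncomputable def S1 (n : ℕ) (c p : ℤ) : ℕ :=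
  ∑ᶠ a ∈ EJcp n c p, ∑ᶠ θ ∈ ThetaSet a, (uRet a θ + lRet a θ)

/-- `S^{(2)}_{n;c,p} = Σ_{α ∈ E_{n;c,p}} Σ_{θ₁ ≠ θ₂ ∈ Θ(α)} u_{θ₁}·l_{θ₂}`
(the inner sum over ordered pairs of distinct cycles). -/
noncomputable def S2 (n : ℕ) (c p : ℤ) : ℕ :=
  ∑ᶠ a ∈ EJcp n c p, ∑ᶠ q ∈ {q : Set (Fin n) × Set (Fin n) |
      q.1 ∈ ThetaSet a ∧ q.2 ∈ ThetaSet a ∧ q.1 ≠ q.2}, uRet a q.1 * lRet a q.2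

/-- `S^{(1)}_{n;·,p}`. -/
noncomputable def S1dot (n : ℕ) (p : ℤ) : ℕ :=
  ∑ᶠ a ∈ {a : PElt n | a ∈ Jones n ∧ pmul a a = a ∧ (numPaths a : ℤ) = p},
    ∑ᶠ θ ∈ ThetaSet a, (uRet a θ + lRet a θ)

/-- `S^{(2)}_{n;·,p}`. -/
noncomputable def S2dot (n : ℕ) (p : ℤ) : ℕ :=
  ∑ᶠ a ∈ {a : PElt n | a ∈ Jones n ∧ pmul a a = a ∧ (numPaths a : ℤ) = p},
    ∑ᶠ q ∈ {q : Set (Fin n) × Set (Fin n) |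
      q.1 ∈ ThetaSet a ∧ q.2 ∈ ThetaSet a ∧ q.1 ≠ q.2}, uRet a q.1 * lRet a q.2

/-!
Products preserve planarity by a winding argument. A path joining `w` to `y` in the stacked graph
splits into arcs carried by blocks of the two factors, and in a planar factor the boundary weight of
its arcs preceding a vertex is constant along every block that the path does not meet. Were the
blocks of `w`, `y` and of `x`, `z` to cross in the product, this weight would differ between
`x` and `z`. Block sizes are bounded because the stacked graph has degrees at most two, with outer
vertices of degree at most one, so that a component contains at most two outer vertices; in the
Jones case a parity count excludes singletons.

If `α` has a lower vertex outside all transversals, then it has an innermost lower block `B`, whose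
indices form an interval. The planar element `γ` with blocks `B`, `B′` and `{i, i′}` for `i ∉ B`
satisfies `αγ = α` with exactly one floating component, whence `α ∘ γ = ξ · α` and all powers of `ξ`
occur. In the Motzkin monoid only the identity has all its lower vertices on transversals; hence the
identity factors only trivially, and no floating component arises in doing so.
-/

/-! ### The stacked graph -/

section Stack

variable {n : ℕ} {a b : PElt n}

theorem stackSetoid_up {p q : PV n} (h : a.r p q) :
    (stackSetoid a b).r (upEmb p) (upEmb q) :=
  .rel _ _ (.inl ⟨p, q, h, rfl, rfl⟩)

theorem stackSetoid_down {p q : PV n} (h : b.r p q) :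
    (stackSetoid a b).r (downEmb p) (downEmb q) :=
  .rel _ _ (.inr ⟨p, q, h, rfl, rfl⟩)

theorem stackSetoid_le {t : Setoid (TV n)} (ha : ∀ p q, a.r p q → t.r (upEmb p) (upEmb q))
    (hb : ∀ p q, b.r p q → t.r (downEmb p) (downEmb q)) : stackSetoid a b ≤ t := by
  refine Setoid.eqvGen_le ?_
  rintro x y (⟨p, q, h, rfl, rfl⟩ | ⟨p, q, h, rfl, rfl⟩)
  exacts [ha p q h, hb p q h]

theorem mem_of_stackSetoid {A : Set (TV n)} {x y : TV n} (h : (stackSetoid a b).r x y)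
    (ha : ∀ p q, a.r p q → upEmb p ∈ A → upEmb q ∈ A)
    (hb : ∀ p q, b.r p q → downEmb p ∈ A → downEmb q ∈ A) (hx : x ∈ A) : y ∈ A := by
  have hle : stackSetoid a b ≤ Setoid.ker (· ∈ A) := stackSetoid_le
    (fun p q hpq => propext ⟨ha p q hpq, ha q p (a.symm hpq)⟩)
    (fun p q hpq => propext ⟨hb p q hpq, hb q p (b.symm hpq)⟩)
  have hxy : (x ∈ A) = (y ∈ A) := hle h
  exact hxy ▸ hx

theorem upEmb_injective : Function.Injective (upEmb (n := n)) := by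
  rintro (i | i) (j | j) h <;> simp_all [upEmb]

theorem downEmb_injective : Function.Injective (downEmb (n := n)) := by
  rintro (i | i) (j | j) h <;> simp_all [downEmb]

theorem outEmb_injective : Function.Injective (outEmb (n := n)) := by
  rintro (i | i) (j | j) h <;> simp_all [outEmb]

theorem ordIdx_injective : Function.Injective (ordIdx n) := by
  rintro (i | i) (j | j) h <;> simp only [ordIdx] at h <;> simp [Fin.ext_iff] <;> omega

end Stack

/-! ### Planarity of products -/

section Planar

variable {n : ℕ} {a b : PElt n}

theorem IsPlanar.rel_of_lt (ha : IsPlanar a) {w x y z : PV n} (hwx : ordIdx n w < ordIdx n x)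
    (hxy : ordIdx n x < ordIdx n y) (hyz : ordIdx n y < ordIdx n z) (hwy : a.r w y)
    (hxz : a.r x z) : a.r w x :=
  not_not.mp fun h => ha ⟨w, x, y, z, hwx, hxy, hyz, hwy, hxz, h⟩

theorem IsPlanar.between_of_rel (ha : IsPlanar a) {p q x y : PV n} (hpq : a.r p q)
    (hxy : a.r x y) (hpx : ¬ a.r p x) (h₁ : ordIdx n p < ordIdx n x)
    (h₂ : ordIdx n x < ordIdx n q) : ordIdx n p < ordIdx n y ∧ ordIdx n y < ordIdx n q := by
  have hpy : ordIdx n y ≠ ordIdx n p := fun h =>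
    hpx (ordIdx_injective h ▸ a.symm hxy)
  have hqy : ordIdx n y ≠ ordIdx n q := fun h =>
    hpx (a.trans hpq (ordIdx_injective h ▸ a.symm hxy))
  constructor
  · by_contra! h
    exact hpx (a.symm (a.trans hxy (ha.rel_of_lt (by omega) h₁ h₂ (a.symm hxy) hpq)))
  · by_contra! h
    exact hpx (ha.rel_of_lt h₁ h₂ (by omega) hpq hxy)

/-- The group of boundaries of integral 1-chains carried by the blocks of `a` meeting `A`,
a partition being read as the graph that joins any two points of a block. -/
def arcBoundaries (a : PElt n) (A : Set (PV n)) : Submodule ℤ (PV n → ℤ) :=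
  .span ℤ {u | ∃ p ∈ A, ∃ q, a.r p q ∧ u = Pi.single p 1 - Pi.single q 1}

/-- The total weight of a chain on the points strictly preceding `x` in the boundary order. -/
def weightBefore (x : PV n) : (PV n → ℤ) →ₗ[ℤ] ℤ :=
  ∑ v with ordIdx n v < ordIdx n x, LinearMap.proj v

theorem weightBefore_apply (x : PV n) (u : PV n → ℤ) :
    weightBefore x u = ∑ v, if ordIdx n v < ordIdx n x then u v else 0 := by
  simp only [weightBefore, LinearMap.sum_apply, LinearMap.proj_apply, Finset.sum_ite,
    Finset.sum_const_zero, add_zero]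

theorem weightBefore_single (x p : PV n) :
    weightBefore x (Pi.single p 1) = if ordIdx n p < ordIdx n x then 1 else 0 := by
  simp [weightBefore, -Fintype.sum_sum_type]

variable {A : Set (PV n)} {u : PV n → ℤ}

theorem weightBefore_eq_of_rel (ha : IsPlanar a) (hu : u ∈ arcBoundaries a A) {x y : PV n}
    (hxy : a.r x y) (hx : ∀ p ∈ A, ¬ a.r p x) : weightBefore x u = weightBefore y u := by
  suffices arcBoundaries a A ≤ LinearMap.eqLocus (weightBefore x) (weightBefore y) from this hu
  refine Submodule.span_le.mpr ?_
  rintro _ ⟨p, hp, q, hpq, rfl⟩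
  have hpx := hx p hp
  have hpy : ¬ a.r p y := fun h => hpx (a.trans h (a.symm hxy))
  have hqx : ¬ a.r q x := fun h => hpx (a.trans hpq h)
  have hqy : ¬ a.r q y := fun h => hpy (a.trans hpq h)
  have ne_of_not_rel {v w : PV n} (h : ¬ a.r v w) : ordIdx n v ≠ ordIdx n w :=
    fun e => h (ordIdx_injective e ▸ a.refl v)
  have := ne_of_not_rel hpx
  have := ne_of_not_rel hpy
  have := ne_of_not_rel hqx
  have := ne_of_not_rel hqy
  have := ha.between_of_rel hpq hxy hpx
  have := ha.between_of_rel hpq (a.symm hxy) hpy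
  have := ha.between_of_rel (a.symm hpq) hxy hqx
  have := ha.between_of_rel (a.symm hpq) (a.symm hxy) hqy
  simp only [SetLike.mem_coe, LinearMap.mem_eqLocus, map_sub, weightBefore_single]
  split_ifs <;> omega

theorem eq_zero_of_mem_arcBoundaries (hu : u ∈ arcBoundaries a A) {x : PV n}
    (hx : ∀ p ∈ A, ¬ a.r p x) : u x = 0 := by
  suffices arcBoundaries a A ≤ LinearMap.ker (LinearMap.proj x) from this hu
  refine Submodule.span_le.mpr ?_
  rintro _ ⟨p, hp, q, hpq, rfl⟩
  have hxp : x ≠ p := fun h => hx p hp (h ▸ a.refl p)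
  have hxq : x ≠ q := fun h => hx p hp (h ▸ hpq)
  simp [hxp, hxq]

theorem sum_eq_zero_of_mem_arcBoundaries (hu : u ∈ arcBoundaries a A) : ∑ x, u x = 0 := by
  suffices arcBoundaries a A ≤ LinearMap.ker (∑ x, LinearMap.proj x) by
    simpa [-Fintype.sum_sum_type] using this hu
  refine Submodule.span_le.mpr ?_
  rintro _ ⟨p, -, q, -, rfl⟩
  simp [-Fintype.sum_sum_type]

theorem weightBefore_inl (i : Fin n) (u : PV n → ℤ) :
    weightBefore (.inl i) u = ∑ j with j < i, u (.inl j) := by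
  have hl (j : Fin n) : ordIdx n (.inl j) < ordIdx n (.inl i) ↔ j < i := Iff.rfl
  have hr (j : Fin n) : ¬ ordIdx n (.inr j) < ordIdx n (.inl i) := by
    simp only [ordIdx]; omega
  simp [weightBefore_apply, Fintype.sum_sum_type, Finset.sum_filter, hl, hr]

theorem weightBefore_inr (i : Fin n) {u : PV n → ℤ} (hu : ∑ x, u x = 0) :
    weightBefore (.inr i) u = -∑ j with j ≤ i, u (.inr j) := by
  have hl (j : Fin n) : ordIdx n (.inl j) < ordIdx n (.inr i) := by
    simp only [ordIdx]; omega
  have hr (j : Fin n) : ordIdx n (.inr j) < ordIdx n (.inr i) ↔ ¬ j ≤ i := by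
    simp only [ordIdx, Fin.le_def]; omega
  have hsplit := Finset.sum_filter_add_sum_filter_not Finset.univ (· ≤ i) fun j => u (.inr j)
  simp only [Fintype.sum_sum_type, weightBefore_apply, Finset.sum_filter, hl, hr, if_true]
    at hu hsplit ⊢
  linarith

/-- The chain on the three layers that carries `u` on the upper and `v` on the lower diagram. -/
def stackChain (u v : PV n → ℤ) : TV n → ℤ :=
  Sum.elim (fun i => u (.inl i)) (Sum.elim (fun i => u (.inr i) + v (.inl i)) fun i => v (.inr i))

theorem stackChain_add_up (u v : PV n → ℤ) (p q : PV n) :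
    stackChain (u + (Pi.single p 1 - Pi.single q 1)) v =
      stackChain u v + (Pi.single (upEmb p) 1 - Pi.single (upEmb q) 1) := by
  ext (i | i | i) <;> rcases p with p | p <;> rcases q with q | q <;>
    simp [stackChain, upEmb, Pi.single_apply] <;> ring

theorem stackChain_add_down (u v : PV n → ℤ) (p q : PV n) :
    stackChain u (v + (Pi.single p 1 - Pi.single q 1)) =
      stackChain u v + (Pi.single (downEmb p) 1 - Pi.single (downEmb q) 1) := by
  ext (i | i | i) <;> rcases p with p | p <;> rcases q with q | q <;>
    simp [stackChain, downEmb, Pi.single_apply] <;> ring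

theorem exists_stackChain_of_stackSetoid {s t : TV n} (h : (stackSetoid a b).r s t) :
    ∃ u ∈ arcBoundaries a {p | (stackSetoid a b).r s (upEmb p)},
      ∃ v ∈ arcBoundaries b {p | (stackSetoid a b).r s (downEmb p)},
        stackChain u v = Pi.single s 1 - Pi.single t 1 := by
  let A : Set (TV n) := {t | (stackSetoid a b).r s t ∧
    ∃ u ∈ arcBoundaries a {p | (stackSetoid a b).r s (upEmb p)},
      ∃ v ∈ arcBoundaries b {p | (stackSetoid a b).r s (downEmb p)},
        stackChain u v = Pi.single s 1 - Pi.single t 1}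
  have hs : s ∈ A := ⟨(stackSetoid a b).refl s, 0, zero_mem _, 0, zero_mem _, by
    ext (i | i | i) <;> simp [stackChain]⟩
  suffices t ∈ A from this.2
  refine mem_of_stackSetoid h ?_ ?_ hs
  · rintro p q hpq ⟨hp, u, hu, v, hv, huv⟩
    refine ⟨(stackSetoid a b).trans hp (stackSetoid_up hpq), u + (Pi.single p 1 - Pi.single q 1),
      add_mem hu (Submodule.subset_span ⟨p, hp, q, hpq, rfl⟩), v, hv, ?_⟩
    rw [stackChain_add_up, huv, sub_add_sub_cancel]
  · rintro p q hpq ⟨hp, u, hu, v, hv, huv⟩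
    refine ⟨(stackSetoid a b).trans hp (stackSetoid_down hpq), u, hu,
      v + (Pi.single p 1 - Pi.single q 1),
      add_mem hv (Submodule.subset_span ⟨p, hp, q, hpq, rfl⟩), ?_⟩
    rw [stackChain_add_down, huv, sub_add_sub_cancel]

/-- The weights of `u` and of `v` before a vertex, read on the three layers with the upper diagram
having priority on the middle row. -/
def stackWeight (u v : PV n → ℤ) : TV n → ℤ :=
  Sum.elim (fun i => weightBefore (.inl i) u)
    (Sum.elim (fun i => weightBefore (.inr i) u) fun i => weightBefore (.inr i) v)

theorem stackWeight_upEmb (u v : PV n → ℤ) (p : PV n) :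
    stackWeight u v (upEmb p) = weightBefore p u := by
  rcases p with i | i <;> rfl

theorem weightBefore_inr_eq_inl {u v : PV n → ℤ} {i : Fin n} (hu : ∑ x, u x = 0)
    (hui : u (.inr i) = 0) (huv : ∀ j, u (.inr j) + v (.inl j) = 0) :
    weightBefore (.inr i) u = weightBefore (.inl i) v := by
  have hins : Finset.univ.filter (· ≤ i) = insert i (Finset.univ.filter (· < i)) := by
    ext j; simp [le_iff_eq_or_lt]
  rw [weightBefore_inr i hu, weightBefore_inl, hins, Finset.sum_insert (by simp), hui, zero_add,
    ← Finset.sum_neg_distrib]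
  exact Finset.sum_congr rfl fun j _ => neg_eq_of_add_eq_zero_right (huv j)

theorem stackWeight_outEmb {u v g : PV n → ℤ} (hv : ∑ x, v x = 0) (hg : ∑ x, g x = 0)
    (huv : ∀ p, stackChain u v (outEmb p) = g p) (p : PV n) :
    stackWeight u v (outEmb p) = weightBefore p g := by
  rcases p with i | i
  · have htop (j : Fin n) : u (.inl j) = g (.inl j) := huv (.inl j)
    simp [stackWeight, outEmb, weightBefore_inl, htop]
  · have hbottom (j : Fin n) : v (.inr j) = g (.inr j) := huv (.inr j)
    simp [stackWeight, outEmb, weightBefore_inr i hv, weightBefore_inr i hg, hbottom]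

theorem stackWeight_eq_of_stackSetoid (ha : IsPlanar a) (hb : IsPlanar b) {s x y : TV n}
    {u v : PV n → ℤ} (hu : u ∈ arcBoundaries a {p | (stackSetoid a b).r s (upEmb p)})
    (hv : v ∈ arcBoundaries b {p | (stackSetoid a b).r s (downEmb p)})
    (huv : ∀ i, stackChain u v (.inr (.inl i)) = 0)
    (hxy : (stackSetoid a b).r x y) (hsx : ¬ (stackSetoid a b).r s x) :
    stackWeight u v y = stackWeight u v x := by
  have not_rel_up {p q : PV n} (hq : ¬ (stackSetoid a b).r s (upEmb q))
      (hp : (stackSetoid a b).r s (upEmb p)) : ¬ a.r p q :=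
    fun h => hq ((stackSetoid a b).trans hp (stackSetoid_up h))
  have not_rel_down {p q : PV n} (hq : ¬ (stackSetoid a b).r s (downEmb q))
      (hp : (stackSetoid a b).r s (downEmb p)) : ¬ b.r p q :=
    fun h => hq ((stackSetoid a b).trans hp (stackSetoid_down h))
  have stackWeight_downEmb {p : PV n} (hp : ¬ (stackSetoid a b).r s (downEmb p)) :
      stackWeight u v (downEmb p) = weightBefore p v := by
    rcases p with i | i
    · exact weightBefore_inr_eq_inl (sum_eq_zero_of_mem_arcBoundaries hu)
        (eq_zero_of_mem_arcBoundaries hu fun _ => not_rel_up hp) huv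
    · rfl
  let A : Set (TV n) := {z | ¬ (stackSetoid a b).r s z ∧ stackWeight u v z = stackWeight u v x}
  suffices y ∈ A from this.2
  refine mem_of_stackSetoid hxy ?_ ?_ ⟨hsx, rfl⟩
  · rintro p q hpq ⟨hsp, hp⟩
    refine ⟨fun h => hsp ((stackSetoid a b).trans h (stackSetoid_up (a.symm hpq))), ?_⟩
    rw [← hp, stackWeight_upEmb, stackWeight_upEmb]
    exact (weightBefore_eq_of_rel ha hu hpq fun _ => not_rel_up hsp).symm
  · rintro p q hpq ⟨hsp, hp⟩
    have hsq : ¬ (stackSetoid a b).r s (downEmb q) :=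
      fun h => hsp ((stackSetoid a b).trans h (stackSetoid_down (b.symm hpq)))
    refine ⟨hsq, ?_⟩
    rw [← hp, stackWeight_downEmb hsp, stackWeight_downEmb hsq]
    exact (weightBefore_eq_of_rel hb hv hpq fun _ => not_rel_down hsp).symm

theorem isPlanar_pmul (ha : IsPlanar a) (hb : IsPlanar b) : IsPlanar (pmul a b) := by
  rintro ⟨w, x, y, z, hwx, hxy, hyz, hwy, hxz, hnwx⟩
  obtain ⟨u, hu, v, hv, huv⟩ := exists_stackChain_of_stackSetoid hwy
  have huv_mid (i : Fin n) : stackChain u v (.inr (.inl i)) = 0 := by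
    rw [huv]
    rcases w with w | w <;> rcases y with y | y <;> simp [outEmb]
  have huv_out (p : PV n) : stackChain u v (outEmb p) =
      (Pi.single w 1 - Pi.single y 1 : PV n → ℤ) p := by
    simp [huv, Pi.single_apply, outEmb_injective.eq_iff]
  have hg : ∑ p, (Pi.single w 1 - Pi.single y 1 : PV n → ℤ) p = 0 := by
    simp [-Fintype.sum_sum_type]
  have hout := stackWeight_outEmb (sum_eq_zero_of_mem_arcBoundaries hv) hg huv_out
  have hweight := stackWeight_eq_of_stackSetoid ha hb hu hv huv_mid hxz hnwx
  simp only [hout, map_sub, weightBefore_single] at hweight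
  split_ifs at hweight <;> omega

end Planar

/-! ### Block sizes of products -/

section GraphDegree

variable {V : Type*} {G : SimpleGraph V}

theorem ncard_degree_le_one_le_two [Finite V] (hG : G.Connected)
    (hdeg : ∀ v, (G.neighborSet v).ncard ≤ 2) :
    {v | (G.neighborSet v).ncard ≤ 1}.ncard ≤ 2 := by
  classical
  have := Fintype.ofFinite V
  have degree_eq (v : V) : G.degree v = (G.neighborSet v).ncard :=
    (Set.ncard_eq_toFinset_card' _).symm
  have hvert := hG.card_vert_le_card_edgeSet_add_one
  rw [Nat.card_eq_fintype_card, Nat.card_eq_fintype_card, ← SimpleGraph.edgeFinset_card] at hvert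
  have hsum := G.sum_degrees_eq_twice_card_edges
  have hle : ∑ v, (G.degree v + if G.degree v ≤ 1 then 1 else 0) ≤ ∑ _v : V, 2 :=
    Finset.sum_le_sum fun v _ => by rw [degree_eq]; have := hdeg v; split_ifs <;> omega
  rw [Finset.sum_add_distrib, ← Finset.card_filter, hsum, Finset.sum_const, Finset.card_univ,
    smul_eq_mul] at hle
  simp only [← degree_eq, Set.ncard_eq_toFinset_card', Set.toFinset_ofPred]
  omega

theorem ncard_reachable_degree_le_one_le_two [Finite V]
    (hdeg : ∀ v, (G.neighborSet v).ncard ≤ 2) (w : V) :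
    {v | G.Reachable w v ∧ (G.neighborSet v).ncard ≤ 1}.ncard ≤ 2 := by
  let C := G.connectedComponentMk w
  have ncard_neighborSet (v : C) :
      (C.toSimpleGraph.neighborSet v).ncard = (G.neighborSet v).ncard := by
    rw [← Set.ncard_image_of_injective _ Subtype.val_injective]
    congr 1
    ext u
    simp only [Set.mem_image, SimpleGraph.mem_neighborSet]
    exact ⟨fun ⟨_, hu, e⟩ => e ▸ hu,
      fun hu => ⟨⟨u, (SimpleGraph.ConnectedComponent.mem_supp_congr_adj C hu).mp v.2⟩, hu, rfl⟩⟩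
  have hC := ncard_degree_le_one_le_two C.connected_toSimpleGraph fun v => by
    rw [ncard_neighborSet]; exact hdeg v
  rw [← Set.ncard_image_of_injective _ Subtype.val_injective] at hC
  refine (Set.ncard_le_ncard ?_).trans hC
  rintro v ⟨hwv, hv⟩
  refine ⟨⟨v, SimpleGraph.ConnectedComponent.eq.mpr hwv.symm⟩, ?_, rfl⟩
  rwa [Set.mem_ofPred_eq, ncard_neighborSet]

end GraphDegree

section BlockCard

variable {n : ℕ} {a b : PElt n}

theorem blockCard_eq_ncard (a : PElt n) (x : PV n) : blockCard a x = {y | a.r x y}.ncard :=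
  rfl

/-- The stacked graph of `a` on `b`, without its loops. -/
def stackGraph (a b : PElt n) : SimpleGraph (TV n) :=
  SimpleGraph.fromRel (stackRel a b)

theorem stackGraph_adj {x y : TV n} : (stackGraph a b).Adj x y ↔
    (∃ p q, (a.r p q ∧ q ≠ p) ∧ upEmb p = x ∧ upEmb q = y) ∨
      ∃ p q, (b.r p q ∧ q ≠ p) ∧ downEmb p = x ∧ downEmb q = y := by
  rw [stackGraph, SimpleGraph.fromRel_adj]
  constructor
  · rintro ⟨hne, (⟨p, q, h, rfl, rfl⟩ | ⟨p, q, h, rfl, rfl⟩) |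
      (⟨q, p, h, rfl, rfl⟩ | ⟨q, p, h, rfl, rfl⟩)⟩
    · exact .inl ⟨p, q, ⟨h, fun e => hne (e ▸ rfl)⟩, rfl, rfl⟩
    · exact .inr ⟨p, q, ⟨h, fun e => hne (e ▸ rfl)⟩, rfl, rfl⟩
    · exact .inl ⟨p, q, ⟨a.symm h, fun e => hne (e ▸ rfl)⟩, rfl, rfl⟩
    · exact .inr ⟨p, q, ⟨b.symm h, fun e => hne (e ▸ rfl)⟩, rfl, rfl⟩
  · rintro (⟨p, q, ⟨h, hne⟩, rfl, rfl⟩ | ⟨p, q, ⟨h, hne⟩, rfl, rfl⟩)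
    · exact ⟨fun e => hne (upEmb_injective e).symm, .inl (.inl ⟨p, q, h, rfl, rfl⟩)⟩
    · exact ⟨fun e => hne (downEmb_injective e).symm, .inl (.inr ⟨p, q, h, rfl, rfl⟩)⟩

theorem stackGraph_reachable {x y : TV n} (h : (stackSetoid a b).r x y) :
    (stackGraph a b).Reachable x y := by
  suffices stackSetoid a b ≤ (stackGraph a b).reachableSetoid from this h
  refine stackSetoid_le (fun p q hpq => ?_) fun p q hpq => ?_ <;>
    rcases eq_or_ne q p with rfl | hne
  · exact .rfl
  · exact (stackGraph_adj.mpr (.inl ⟨p, q, ⟨hpq, hne⟩, rfl, rfl⟩)).reachable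
  · exact .rfl
  · exact (stackGraph_adj.mpr (.inr ⟨p, q, ⟨hpq, hne⟩, rfl, rfl⟩)).reachable

theorem ncard_image_block_diff_le_one {x : PV n} (h : blockCard a x ≤ 2) (e : PV n → TV n) :
    (e '' {y | a.r x y ∧ y ≠ x}).ncard ≤ 1 := by
  have hdiff := Set.ncard_sdiff_singleton_of_mem (show x ∈ {y | a.r x y} from a.refl x)
  rw [blockCard_eq_ncard] at h
  exact (Set.ncard_image_le (Set.toFinite _)).trans (hdiff.le.trans (by omega))

theorem ncard_neighborSet_outEmb_le_one (ha : ∀ x, blockCard a x ≤ 2)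
    (hb : ∀ x, blockCard b x ≤ 2) (x : PV n) :
    ((stackGraph a b).neighborSet (outEmb x)).ncard ≤ 1 := by
  rcases x with i | i
  · refine (Set.ncard_le_ncard ?_).trans (ncard_image_block_diff_le_one (ha (.inl i)) upEmb)
    intro y hy
    rcases stackGraph_adj.mp hy with ⟨p, q, h, hp, rfl⟩ | ⟨p, q, h, hp, rfl⟩
    · obtain rfl : p = .inl i := upEmb_injective hp
      exact ⟨q, h, rfl⟩
    · rcases p with p | p <;> cases hp
  · refine (Set.ncard_le_ncard ?_).trans (ncard_image_block_diff_le_one (hb (.inr i)) downEmb)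
    intro y hy
    rcases stackGraph_adj.mp hy with ⟨p, q, h, hp, rfl⟩ | ⟨p, q, h, hp, rfl⟩
    · rcases p with p | p <;> cases hp
    · obtain rfl : p = .inr i := downEmb_injective hp
      exact ⟨q, h, rfl⟩

theorem ncard_neighborSet_middle_le_two (ha : ∀ x, blockCard a x ≤ 2)
    (hb : ∀ x, blockCard b x ≤ 2) (i : Fin n) :
    ((stackGraph a b).neighborSet (.inr (.inl i))).ncard ≤ 2 := by
  have hsub : (stackGraph a b).neighborSet (.inr (.inl i)) ⊆
      upEmb '' {y | a.r (.inr i) y ∧ y ≠ .inr i} ∪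
        downEmb '' {y | b.r (.inl i) y ∧ y ≠ .inl i} := by
    intro y hy
    rcases stackGraph_adj.mp hy with ⟨p, q, h, hp, rfl⟩ | ⟨p, q, h, hp, rfl⟩
    · obtain rfl : p = .inr i := upEmb_injective hp
      exact .inl ⟨q, h, rfl⟩
    · obtain rfl : p = .inl i := downEmb_injective hp
      exact .inr ⟨q, h, rfl⟩
  have hup := ncard_image_block_diff_le_one (ha (.inr i)) upEmb
  have hdown := ncard_image_block_diff_le_one (hb (.inl i)) downEmb
  exact (Set.ncard_le_ncard hsub).trans ((Set.ncard_union_le _ _).trans (by omega))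

theorem blockCard_pmul_le_two (ha : ∀ x, blockCard a x ≤ 2) (hb : ∀ x, blockCard b x ≤ 2)
    (x : PV n) : blockCard (pmul a b) x ≤ 2 := by
  have hdeg (z : TV n) : ((stackGraph a b).neighborSet z).ncard ≤ 2 := by
    rcases z with i | i | i
    · exact (ncard_neighborSet_outEmb_le_one ha hb (.inl i)).trans one_le_two
    · exact ncard_neighborSet_middle_le_two ha hb i
    · exact (ncard_neighborSet_outEmb_le_one ha hb (.inr i)).trans one_le_two
  rw [blockCard_eq_ncard, ← Set.ncard_image_of_injective _ outEmb_injective]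
  refine (Set.ncard_le_ncard ?_).trans (ncard_reachable_degree_le_one_le_two hdeg (outEmb x))
  rintro _ ⟨y, hxy, rfl⟩
  exact ⟨stackGraph_reachable hxy, ncard_neighborSet_outEmb_le_one ha hb y⟩

end BlockCard

section Parity

theorem even_ncard_of_saturated {α : Type*} [Finite α] {r : Setoid α}
    (hr : ∀ x, Even {y | r.r x y}.ncard) {A : Set α} (hA : ∀ x y, r.r x y → x ∈ A → y ∈ A) :
    Even A.ncard := by
  classical
  have := Fintype.ofFinite α
  rw [Set.ncard_eq_toFinset_card', Finset.card_eq_sum_card_fiberwise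
    (f := Quotient.mk r) (t := Finset.univ) fun _ _ => Finset.mem_univ _]
  refine Finset.even_sum _ fun c _ => ?_
  induction c using Quotient.inductionOn with | _ x
  by_cases hx : x ∈ A
  · have hfiber : (A.toFinset.filter (Quotient.mk r · = Quotient.mk r x) : Set α) =
        {y | r.r x y} := by
      ext y
      simp only [Finset.coe_filter, Set.mem_toFinset, Quotient.eq, Set.mem_ofPred_eq]
      exact ⟨fun h => r.symm h.2, fun h => ⟨hA x y h hx, r.symm h⟩⟩
    rw [← Set.ncard_coe_finset, hfiber]
    exact hr x
  · have hfiber : A.toFinset.filter (Quotient.mk r · = Quotient.mk r x) = ∅ :=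
      Finset.filter_eq_empty_iff.mpr fun y hy hyx =>
        hx (hA y x (Quotient.exact hyx) (Set.mem_toFinset.mp hy))
    rw [hfiber]
    exact Even.zero

theorem ncard_eq_ncard_preimage_inl_add_inr {α β : Type*} [Finite α] [Finite β]
    (A : Set (α ⊕ β)) : A.ncard = (Sum.inl ⁻¹' A).ncard + (Sum.inr ⁻¹' A).ncard := by
  have hdisj : Disjoint (Sum.inl '' (Sum.inl ⁻¹' A)) (Sum.inr '' (Sum.inr ⁻¹' A)) :=
    Set.disjoint_image_inl_image_inr
  rw [← Set.ncard_image_of_injective (Sum.inl ⁻¹' A) Sum.inl_injective,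
    ← Set.ncard_image_of_injective (Sum.inr ⁻¹' A) Sum.inr_injective, ← Set.ncard_union_eq hdisj,
    Set.image_preimage_inl_union_image_preimage_inr]

variable {n : ℕ} {a b : PElt n}

theorem even_blockCard_pmul (ha : ∀ x, Even (blockCard a x)) (hb : ∀ x, Even (blockCard b x))
    (x : PV n) : Even (blockCard (pmul a b) x) := by
  let C : Set (TV n) := {z | (stackSetoid a b).r (outEmb x) z}
  have hup : Even (upEmb ⁻¹' C).ncard := even_ncard_of_saturated ha fun p q hpq hp =>
    (stackSetoid a b).trans hp (stackSetoid_up hpq)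
  have hdown : Even (downEmb ⁻¹' C).ncard := even_ncard_of_saturated hb fun p q hpq hp =>
    (stackSetoid a b).trans hp (stackSetoid_down hpq)
  change Even (outEmb ⁻¹' C).ncard
  rw [ncard_eq_ncard_preimage_inl_add_inr] at hup hdown ⊢
  have hmid : Sum.inr ⁻¹' (upEmb ⁻¹' C) = Sum.inl ⁻¹' (downEmb ⁻¹' C) := rfl
  have htop : Sum.inl ⁻¹' (outEmb ⁻¹' C) = Sum.inl ⁻¹' (upEmb ⁻¹' C) := rfl
  have hbottom : Sum.inr ⁻¹' (outEmb ⁻¹' C) = Sum.inr ⁻¹' (downEmb ⁻¹' C) := rfl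
  rw [htop, hbottom]
  rw [hmid] at hup
  grind

theorem blockCard_pos (a : PElt n) (x : PV n) : 0 < blockCard a x :=
  (Set.ncard_pos (s := {y | a.r x y})).mpr ⟨x, a.refl x⟩

theorem pmul_mem_motzkin (ha : a ∈ Motzkin n) (hb : b ∈ Motzkin n) : pmul a b ∈ Motzkin n :=
  ⟨isPlanar_pmul ha.1 hb.1, blockCard_pmul_le_two ha.2 hb.2⟩

theorem jones_subset_motzkin : Jones n ⊆ Motzkin n :=
  fun _ ha => ⟨ha.1, fun x => (ha.2 x).le⟩

theorem pmul_mem_jones (ha : a ∈ Jones n) (hb : b ∈ Jones n) : pmul a b ∈ Jones n := by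
  refine ⟨isPlanar_pmul ha.1 hb.1, fun x => ?_⟩
  have hle := (pmul_mem_motzkin (jones_subset_motzkin ha) (jones_subset_motzkin hb)).2 x
  have hpos := blockCard_pos (pmul a b) x
  have heven : Even (blockCard (pmul a b) x) := even_blockCard_pmul
    (fun y => ha.2 y ▸ even_two) (fun y => hb.2 y ▸ even_two) x
  grind

end Parity

/-! ### Caps -/

section Cap

variable {n : ℕ} {a : PElt n} {B : Set (Fin n)}

open Classical in
/-- The name of the block of `capElt B` containing a given vertex. -/
noncomputable def capLabel (B : Set (Fin n)) : PV n → Fin n ⊕ Bool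
  | .inl i => if i ∈ B then .inr true else .inl i
  | .inr i => if i ∈ B then .inr false else .inl i

/-- The cap over `B`: its blocks are `B`, `B′` and the `{i, i′}` with `i ∉ B`. -/
noncomputable def capElt (B : Set (Fin n)) : PElt n := Setoid.ker (capLabel B)

theorem capElt_inl_inl {i j : Fin n} :
    (capElt B).r (.inl i) (.inl j) ↔ i = j ∨ (i ∈ B ∧ j ∈ B) := by
  change capLabel B _ = capLabel B _ ↔ _
  grind [capLabel]

theorem capElt_inr_inr {i j : Fin n} :
    (capElt B).r (.inr i) (.inr j) ↔ i = j ∨ (i ∈ B ∧ j ∈ B) := by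
  change capLabel B _ = capLabel B _ ↔ _
  grind [capLabel]

theorem capElt_inl_inr {i j : Fin n} : (capElt B).r (.inl i) (.inr j) ↔ i = j ∧ i ∉ B := by
  change capLabel B _ = capLabel B _ ↔ _
  grind [capLabel]

theorem capElt_inr_inl {i j : Fin n} : (capElt B).r (.inr i) (.inl j) ↔ i = j ∧ i ∉ B := by
  change capLabel B _ = capLabel B _ ↔ _
  grind [capLabel]

theorem capElt_empty : capElt ∅ = pid n := by
  ext x y
  change (capElt ∅).r x y ↔ Sum.elim id id x = Sum.elim id id y
  rcases x with i | i <;> rcases y with j | j <;>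
    simp [capElt_inl_inl, capElt_inl_inr, capElt_inr_inl, capElt_inr_inr]

theorem isPlanar_capElt (hB : B.OrdConnected) : IsPlanar (capElt B) := by
  have mem_of_lt {i j k : Fin n} (hi : i ∈ B) (hk : k ∈ B) (hij : i.val < j.val)
      (hjk : j.val < k.val) : j ∈ B := hB.out hi hk ⟨hij.le, hjk.le⟩
  rintro ⟨w | w, x | x, y | y, z | z, hwx, hxy, hyz, hwy, hxz, hnwx⟩ <;>
    simp only [ordIdx, capElt_inl_inl, capElt_inl_inr, capElt_inr_inl, capElt_inr_inr]
      at hwx hxy hyz hwy hxz hnwx <;>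
    grind

theorem blockCard_capElt_of_mem {x : PV n} (hx : Sum.elim id id x ∈ B) :
    blockCard (capElt B) x = B.ncard := by
  rw [blockCard_eq_ncard]
  rcases x with i | i <;> change i ∈ B at hx
  · rw [← Set.ncard_image_of_injective B Sum.inl_injective]
    congr 1
    ext (j | j)
    · exact capElt_inl_inl.trans (by grind)
    · exact capElt_inl_inr.trans (by grind)
  · rw [← Set.ncard_image_of_injective B Sum.inr_injective]
    congr 1
    ext (j | j)
    · exact capElt_inr_inl.trans (by grind)
    · exact capElt_inr_inr.trans (by grind)

theorem blockCard_capElt_of_notMem {x : PV n} (hx : Sum.elim id id x ∉ B) :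
    blockCard (capElt B) x = 2 := by
  have hblock : {y | (capElt B).r x y} = {.inl (Sum.elim id id x), .inr (Sum.elim id id x)} := by
    rcases x with i | i <;> change i ∉ B at hx <;> ext (j | j)
    · exact capElt_inl_inl.trans (by simp [hx, eq_comm])
    · exact capElt_inl_inr.trans (by simp [hx, eq_comm])
    · exact capElt_inr_inl.trans (by simp [hx, eq_comm])
    · exact capElt_inr_inr.trans (by simp [hx, eq_comm])
  rw [blockCard_eq_ncard, hblock, Set.ncard_pair Sum.inl_ne_inr]

/-- The lower vertices indexed by `B` form a nontransversal block of `a`, or `B` is empty. -/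
def IsLowerBlock (a : PElt n) (B : Set (Fin n)) : Prop :=
  ∀ k ∈ B, ∀ q, a.r (.inr k) q ↔ q ∈ Sum.inr '' B

theorem IsLowerBlock.blockCard_eq (hB : IsLowerBlock a B) {k : Fin n} (hk : k ∈ B) :
    blockCard a (.inr k) = B.ncard := by
  have hblock : {q | a.r (.inr k) q} = Sum.inr '' B := Set.ext (hB k hk)
  rw [blockCard_eq_ncard, hblock, Set.ncard_image_of_injective _ Sum.inr_injective]

/-- Identification of the middle row with the lower row. -/
def collapse : TV n → PV n
  | .inl i => .inl i
  | .inr (.inl i) => .inr i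
  | .inr (.inr i) => .inr i

theorem collapse_upEmb (p : PV n) : collapse (upEmb p) = p := by
  rcases p with i | i <;> rfl

theorem collapse_downEmb (p : PV n) : collapse (downEmb p) = .inr (Sum.elim id id p) := by
  rcases p with i | i <;> rfl

theorem collapse_outEmb (p : PV n) : collapse (outEmb p) = p := by
  rcases p with i | i <;> rfl

theorem IsLowerBlock.stackSetoid_capElt_le (hB : IsLowerBlock a B) :
    stackSetoid a (capElt B) ≤ Setoid.comap collapse a := by
  have rel_of_mem {i j : Fin n} (h : i = j ∨ (i ∈ B ∧ j ∈ B)) : a.r (.inr i) (.inr j) := by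
    rcases h with rfl | ⟨hi, hj⟩
    exacts [a.refl _, (hB i hi _).mpr ⟨j, hj, rfl⟩]
  refine stackSetoid_le (fun p q hpq => ?_) fun p q hpq => ?_
  · change a.r (collapse (upEmb p)) (collapse (upEmb q))
    rwa [collapse_upEmb, collapse_upEmb]
  · change a.r (collapse (downEmb p)) (collapse (downEmb q))
    rw [collapse_downEmb, collapse_downEmb]
    rcases p with i | i <;> rcases q with j | j
    · exact rel_of_mem (capElt_inl_inl.mp hpq)
    · exact rel_of_mem (.inl (capElt_inl_inr.mp hpq).1)
    · exact rel_of_mem (.inl (capElt_inr_inl.mp hpq).1)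
    · exact rel_of_mem (capElt_inr_inr.mp hpq)

theorem IsLowerBlock.le_pmul_capElt (hB : IsLowerBlock a B) : a ≤ pmul a (capElt B) := by
  intro x y hxy
  have rel_of_mem {k : Fin n} (hk : k ∈ B) {q : PV n} (hq : a.r (.inr k) q) :
      (pmul a (capElt B)).r (.inr k) q := by
    obtain ⟨l, hl, rfl⟩ := (hB k hk q).mp hq
    exact stackSetoid_down (p := .inr k) (q := .inr l) (capElt_inr_inr.mpr (.inr ⟨hk, hl⟩))
  have outEmb_rel_upEmb {z : PV n} (hz : z ∉ Sum.inr '' B) :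
      (stackSetoid a (capElt B)).r (outEmb z) (upEmb z) := by
    rcases z with i | i
    · exact (stackSetoid a (capElt B)).refl _
    · exact stackSetoid_down (p := .inr i) (q := .inl i)
        (capElt_inr_inl.mpr ⟨rfl, fun hi => hz ⟨i, hi, rfl⟩⟩)
  by_cases hx : x ∈ Sum.inr '' B
  · obtain ⟨k, hk, rfl⟩ := hx
    exact rel_of_mem hk hxy
  by_cases hy : y ∈ Sum.inr '' B
  · obtain ⟨k, hk, rfl⟩ := hy
    exact (pmul a (capElt B)).symm (rel_of_mem hk (a.symm hxy))
  exact (stackSetoid a (capElt B)).trans (outEmb_rel_upEmb hx)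
    ((stackSetoid a (capElt B)).trans (stackSetoid_up hxy)
      ((stackSetoid a (capElt B)).symm (outEmb_rel_upEmb hy)))

theorem IsLowerBlock.pmul_capElt (hB : IsLowerBlock a B) : pmul a (capElt B) = a := by
  refine le_antisymm (fun x y hxy => ?_) hB.le_pmul_capElt
  have h : a.r (collapse (outEmb x)) (collapse (outEmb y)) := hB.stackSetoid_capElt_le hxy
  rwa [collapse_outEmb, collapse_outEmb] at h

theorem pmul_pid (a : PElt n) : pmul a (pid n) = a :=
  capElt_empty (n := n) ▸ IsLowerBlock.pmul_capElt fun _ hk => hk.elim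

theorem exists_mem_eq_middle_of_floating {x : TV n}
    (hx : ∀ y, (stackSetoid a (capElt B)).r y x → isMiddle y) : ∃ k ∈ B, x = .inr (.inl k) := by
  have hmid := hx x ((stackSetoid a (capElt B)).refl x)
  rcases x with i | i | i
  · exact hmid.elim
  · refine ⟨i, not_not.mp fun hi => ?_, rfl⟩
    exact hx (.inr (.inr i)) (stackSetoid_down (p := .inr i) (q := .inl i)
      (capElt_inr_inl.mpr ⟨rfl, hi⟩))
  · exact hmid.elim

theorem floatCount_pid (a : PElt n) : floatCount a (pid n) = 0 := by
  rw [← capElt_empty, floatCount, Nat.card_eq_zero]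
  refine .inl ⟨fun ⟨c, hc⟩ => ?_⟩
  induction c using Quotient.inductionOn with | _ x
  obtain ⟨k, hk, -⟩ := exists_mem_eq_middle_of_floating fun y hy => hc y (Quotient.sound hy)
  exact hk

theorem IsLowerBlock.mem_middle_of_stackSetoid (hB : IsLowerBlock a B) {x y : TV n}
    (hxy : (stackSetoid a (capElt B)).r x y) (hx : x ∈ (Sum.inr ∘ Sum.inl) '' B) :
    y ∈ (Sum.inr ∘ Sum.inl) '' B := by
  refine mem_of_stackSetoid hxy ?_ ?_ hx
  · rintro (p | p) q hpq ⟨i, hi, hip⟩ <;> cases hip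
    obtain ⟨j, hj, rfl⟩ := (hB p hi q).mp hpq
    exact ⟨j, hj, rfl⟩
  · rintro (p | p) q hpq ⟨i, hi, hip⟩ <;> cases hip
    rcases q with q | q
    · exact ⟨q, (capElt_inl_inl.mp hpq).elim (· ▸ hi) And.right, rfl⟩
    · exact ((capElt_inl_inr.mp hpq).2 hi).elim

theorem IsLowerBlock.floatCount_capElt (hB : IsLowerBlock a B) (hne : B.Nonempty) :
    floatCount a (capElt B) = 1 := by
  obtain ⟨k, hk⟩ := hne
  rw [floatCount, Nat.card_eq_one_iff_exists]
  refine ⟨⟨Quotient.mk _ (.inr (.inl k)), fun x hx => ?_⟩, fun ⟨c, hc⟩ => ?_⟩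
  · obtain ⟨i, -, rfl⟩ := hB.mem_middle_of_stackSetoid
      ((stackSetoid a (capElt B)).symm (Quotient.exact hx)) ⟨k, hk, rfl⟩
    trivial
  · induction c using Quotient.inductionOn with | _ x
    obtain ⟨l, hl, rfl⟩ := exists_mem_eq_middle_of_floating fun y hy => hc y (Quotient.sound hy)
    exact Subtype.ext (Quotient.sound (stackSetoid_down (p := .inl l) (q := .inl k)
      (capElt_inl_inl.mpr (.inr ⟨hl, hk⟩))))

end Cap

/-! ### Innermost lower blocks -/

section Innermost

variable {n : ℕ} {a : PElt n}

theorem exists_isGreatest_lower (a : PElt n) (i : Fin n) :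
    ∃ j, IsGreatest {l | a.r (.inr i) (.inr l)} j :=
  Set.exists_max_image _ id (Set.toFinite _) ⟨i, a.refl _⟩

theorem isLowerBlock_of_not_activeUp {i : Fin n} (hi : ¬ activeUp a i) :
    IsLowerBlock a {l | a.r (.inr i) (.inr l)} := by
  rintro k hk (q | q)
  · refine ⟨fun h => (hi ⟨q, a.trans hk h⟩).elim, ?_⟩
    rintro ⟨l, -, hl⟩
    cases hl
  · refine ⟨fun h => ⟨q, a.trans hk h, rfl⟩, ?_⟩
    rintro ⟨l, hl, hlq⟩
    cases hlq
    exact a.trans (a.symm hk) hl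

/-- Among the nontransversal lower blocks, the one whose last vertex comes first is innermost. -/
theorem exists_ordConnected_isLowerBlock (ha : IsPlanar a) (h : ∃ i, ¬ activeUp a i) :
    ∃ B : Set (Fin n), B.Nonempty ∧ B.OrdConnected ∧ IsLowerBlock a B := by
  obtain ⟨i, hi⟩ := h
  obtain ⟨m, hm⟩ := exists_isGreatest_lower a i
  let ends : Set (Fin n) := {j | ∃ i, ¬ activeUp a i ∧ IsGreatest {l | a.r (.inr i) (.inr l)} j}
  obtain ⟨j, ⟨i, hi, hij, hj⟩, hmin⟩ := ends.toFinite.exists_minimal ⟨m, i, hi, hm⟩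
  refine ⟨_, ⟨j, hij⟩, ⟨fun s hs t ht m hm => ?_⟩, isLowerBlock_of_not_activeUp hi⟩
  by_contra him
  have hsm : s < m := lt_of_le_of_ne hm.1 fun e => him (e ▸ hs)
  have hmj : m < j := lt_of_le_of_ne (hm.2.trans (hj ht)) fun e => him (e ▸ hij)
  have trapped {y : PV n} (hy : a.r (.inr m) y) :
      ordIdx n (.inr j) < ordIdx n y ∧ ordIdx n y < ordIdx n (.inr s) :=
    ha.between_of_rel (a.trans (a.symm hij) hs) hy (fun h => him (a.trans hij h))
      (by simp only [ordIdx]; omega) (by simp only [ordIdx]; omega)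
  have hm_inactive : ¬ activeUp a m := fun ⟨l, hl⟩ => by
    have := (trapped hl).1
    simp only [ordIdx] at this
    omega
  obtain ⟨k, hmk, hk⟩ := exists_isGreatest_lower a m
  have hjk : j ≤ k := le_of_not_gt fun hkj => hkj.not_ge (hmin ⟨m, hm_inactive, hmk, hk⟩ hkj.le)
  have := (trapped hmk).1
  simp only [ordIdx] at this
  omega

theorem exists_cap (ha : IsPlanar a) (h : ∃ i, ¬ activeUp a i) :
    ∃ c, IsPlanar c ∧ (∀ x, blockCard c x = 2 ∨ ∃ y, blockCard c x = blockCard a y) ∧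
      pmul a c = a ∧ floatCount a c = 1 := by
  obtain ⟨B, hne, hconn, hB⟩ := exists_ordConnected_isLowerBlock ha h
  refine ⟨capElt B, isPlanar_capElt hconn, fun x => ?_, hB.pmul_capElt,
    hB.floatCount_capElt hne⟩
  by_cases hx : Sum.elim id id x ∈ B
  · exact .inr ⟨.inr _, (blockCard_capElt_of_mem hx).trans (hB.blockCard_eq hx).symm⟩
  · exact .inl (blockCard_capElt_of_notMem hx)

end Innermost

/-! ### Factorisations of the identity -/

section Identity

variable {n : ℕ} {a b : PElt n}

theorem eq_of_rel_of_blockCard_le_two {x y z : PV n} (h : blockCard a x ≤ 2) (hy : a.r x y)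
    (hz : a.r x z) (hyx : y ≠ x) (hzx : z ≠ x) : y = z := by
  by_contra hyz
  have : 2 < {w | a.r x w}.ncard :=
    (Set.two_lt_ncard_iff).mpr ⟨x, y, z, a.refl x, hy, hz, hyx.symm, hzx.symm, hyz⟩
  exact this.not_ge h

theorem inl_unique_of_mem_motzkin (ha : a ∈ Motzkin n) {i j k : Fin n}
    (hj : a.r (.inr i) (.inl j)) (hk : a.r (.inr i) (.inl k)) : j = k :=
  Sum.inl_injective (eq_of_rel_of_blockCard_le_two (ha.2 _) hj hk Sum.inl_ne_inr Sum.inl_ne_inr)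

theorem inr_unique_of_mem_motzkin (ha : a ∈ Motzkin n) {i j k : Fin n}
    (hi : a.r (.inr i) (.inl k)) (hj : a.r (.inr j) (.inl k)) : i = j :=
  Sum.inr_injective (eq_of_rel_of_blockCard_le_two (ha.2 _) (a.symm hi) (a.symm hj)
    Sum.inr_ne_inl Sum.inr_ne_inl)

theorem rel_inr_inl_of_forall_activeUp (ha : a ∈ Motzkin n) (h : ∀ i, activeUp a i) (i : Fin n) :
    a.r (.inr i) (.inl i) := by
  choose σ hσ using h
  have hmono : StrictMono σ := fun i j hij => by
    have hne : σ i ≠ σ j := fun e => hij.ne (inr_unique_of_mem_motzkin ha (hσ i) (e ▸ hσ j))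
    by_contra hle
    have hlt : σ j < σ i := lt_of_le_of_ne (not_lt.mp hle) hne.symm
    have := i.isLt
    have hupper : a.r (.inl (σ j)) (.inl (σ i)) :=
      ha.1.rel_of_lt (x := .inl (σ i)) (y := .inr j) (z := .inr i) hlt
      (by simp only [ordIdx]; omega) (by simp only [ordIdx]; omega) (a.symm (hσ j)) (a.symm (hσ i))
    exact hne (inl_unique_of_mem_motzkin ha (hσ i) (a.trans (hσ i) (a.symm hupper)))
  simpa only [hmono.eq_id, id] using hσ i

theorem eq_pid_of_forall_activeUp (ha : a ∈ Motzkin n) (h : ∀ i, activeUp a i) : a = pid n := by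
  have hdiag := rel_inr_inl_of_forall_activeUp ha h
  have rel_inl (x : PV n) : a.r x (.inl (Sum.elim id id x)) := by
    rcases x with i | i
    exacts [a.refl _, hdiag i]
  ext x y
  change a.r x y ↔ Sum.elim id id x = Sum.elim id id y
  constructor
  · intro hxy
    exact inl_unique_of_mem_motzkin ha (hdiag _)
      (a.trans (a.trans (hdiag _) (a.symm (rel_inl x))) (a.trans hxy (rel_inl y)))
  · intro hxy
    exact a.trans (rel_inl x) (a.symm (hxy ▸ rel_inl y))

theorem activeUp_of_activeUp_pmul {i : Fin n} (h : activeUp (pmul a b) i) : activeUp b i := by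
  by_contra hi
  obtain ⟨j, hij⟩ := h
  let A : Set (TV n) := {z | ∃ k, b.r (.inr i) (.inr k) ∧ z = downEmb (.inr k)}
  have hj : outEmb (.inl j) ∈ A := by
    refine mem_of_stackSetoid hij ?_ ?_ ⟨i, b.refl _, rfl⟩
    · rintro (p | p) q - ⟨k, -, hk⟩ <;> cases hk
    · rintro p (q | q) hpq ⟨k, hik, hk⟩ <;> obtain rfl := downEmb_injective hk
      · exact (hi ⟨q, b.trans hik hpq⟩).elim
      · exact ⟨q, b.trans hik hpq, rfl⟩
  obtain ⟨k, -, hk⟩ := hj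
  cases hk

theorem eq_pid_of_pmul_eq_pid (hb : b ∈ Motzkin n) (h : pmul a b = pid n) :
    a = pid n ∧ b = pid n := by
  have hb_eq : b = pid n := eq_pid_of_forall_activeUp hb fun i =>
    activeUp_of_activeUp_pmul (a := a) (h ▸ ⟨i, rfl⟩)
  exact ⟨by rwa [hb_eq, pmul_pid] at h, hb_eq⟩

theorem exists_cap_of_ne_pid (ha : a ∈ Motzkin n) (hne : a ≠ pid n) :
    ∃ c, IsPlanar c ∧ (∀ x, blockCard c x = 2 ∨ ∃ y, blockCard c x = blockCard a y) ∧
      pmul a c = a ∧ floatCount a c = 1 :=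
  exists_cap ha.1 (not_forall.mp fun h => hne (eq_pid_of_forall_activeUp ha h))

theorem exists_cap_mem_motzkin (ha : a ∈ Motzkin n) (hne : a ≠ pid n) :
    ∃ c ∈ Motzkin n, pmul a c = a ∧ floatCount a c = 1 := by
  obtain ⟨c, hc, hcard, hmul⟩ := exists_cap_of_ne_pid ha hne
  exact ⟨c, ⟨hc, fun x => (hcard x).elim le_of_eq fun ⟨y, hy⟩ => hy ▸ ha.2 y⟩, hmul⟩

theorem exists_cap_mem_jones (ha : a ∈ Jones n) (hne : a ≠ pid n) :
    ∃ c ∈ Jones n, pmul a c = a ∧ floatCount a c = 1 := by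
  obtain ⟨c, hc, hcard, hmul⟩ := exists_cap_of_ne_pid (jones_subset_motzkin ha) hne
  exact ⟨c, ⟨hc, fun x => (hcard x).elim id fun ⟨y, hy⟩ => hy.trans (ha.2 y)⟩, hmul⟩

theorem pid_mem_jones : pid n ∈ Jones n :=
  capElt_empty (n := n) ▸ ⟨isPlanar_capElt Set.ordConnected_empty,
    fun _ => blockCard_capElt_of_notMem (Set.notMem_empty _)⟩

end Identity

/-! ### The twisted variant -/

section Twisted

variable {n : ℕ} {ξ : K} {S : Set (PElt n)}

theorem twistMul_single (ξ : K) (a b : PElt n) (s t : K) :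
    twistMul ξ (Finsupp.single a s) (Finsupp.single b t) =
      Finsupp.single (pmul a b) (s * t * ξ ^ floatCount a b) := by
  simp [twistMul]

theorem single_mem_twistedVariant {a : PElt n} (ha : a ∈ S) :
    Finsupp.single a 1 ∈ TwistedVariant ξ S :=
  fun _ hT => hT.1 a ha

theorem twistMul_mem_twistedVariant {f g : PAlg n K} (hf : f ∈ TwistedVariant ξ S)
    (hg : g ∈ TwistedVariant ξ S) : twistMul ξ f g ∈ TwistedVariant ξ S :=
  fun T hT => hT.2 f (hf T hT) g (hg T hT)

theorem single_pow_mem_twistedVariant {a c : PElt n} (ha : a ∈ S) (hc : c ∈ S)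
    (hac : pmul a c = a) (hfloat : floatCount a c = 1) (i : ℕ) :
    Finsupp.single a (ξ ^ i) ∈ TwistedVariant ξ S := by
  induction i with
  | zero => exact pow_zero ξ ▸ single_mem_twistedVariant ha
  | succ i ih =>
    have h := twistMul_mem_twistedVariant ih (single_mem_twistedVariant hc)
    rwa [twistMul_single, hac, hfloat, mul_one, pow_one, ← pow_succ] at h

theorem mem_insert_single_pid_iff (hone : pid n ∈ S) {f : PAlg n K} :
    f ∈ insert (Finsupp.single (pid n) (1 : K))
        {f | ∃ (i : ℕ), ∃ a ∈ S, a ≠ pid n ∧ f = Finsupp.single a (ξ ^ i)} ↔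
      ∃ (i : ℕ), ∃ a ∈ S, (a = pid n → i = 0) ∧ f = Finsupp.single a (ξ ^ i) := by
  constructor
  · rintro (rfl | ⟨i, a, ha, hne, rfl⟩)
    · exact ⟨0, pid n, hone, fun _ => rfl, by rw [pow_zero]⟩
    · exact ⟨i, a, ha, fun h => absurd h hne, rfl⟩
  · rintro ⟨i, a, ha, hi, rfl⟩
    by_cases h : a = pid n
    · exact .inl (by rw [hi h, pow_zero, h])
    · exact .inr ⟨i, a, ha, h, rfl⟩

theorem twistedVariant_subset (hone : pid n ∈ S) (hsub : S ⊆ Motzkin n)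
    (hmul : ∀ a ∈ S, ∀ b ∈ S, pmul a b ∈ S) :
    TwistedVariant ξ S ⊆ insert (Finsupp.single (pid n) (1 : K))
      {f | ∃ (i : ℕ), ∃ a ∈ S, a ≠ pid n ∧ f = Finsupp.single a (ξ ^ i)} := by
  refine Set.sInter_subset_of_mem ⟨fun a ha => ?_, fun f hf g hg => ?_⟩
  · exact (mem_insert_single_pid_iff hone).mpr ⟨0, a, ha, fun _ => rfl, by rw [pow_zero]⟩
  · obtain ⟨i, a, ha, hi, rfl⟩ := (mem_insert_single_pid_iff hone).mp hf
    obtain ⟨j, b, hb, hj, rfl⟩ := (mem_insert_single_pid_iff hone).mp hg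
    rw [twistMul_single, ← pow_add, ← pow_add]
    refine (mem_insert_single_pid_iff hone).mpr
      ⟨i + j + floatCount a b, pmul a b, hmul a ha b hb, fun h => ?_, rfl⟩
    obtain ⟨ha_eq, hb_eq⟩ := eq_pid_of_pmul_eq_pid (hsub hb) h
    rw [hi ha_eq, hj hb_eq, hb_eq, floatCount_pid]

theorem twistedVariant_eq_of_exists_cap (hone : pid n ∈ S) (hsub : S ⊆ Motzkin n)
    (hmul : ∀ a ∈ S, ∀ b ∈ S, pmul a b ∈ S)
    (hcap : ∀ a ∈ S, a ≠ pid n → ∃ c ∈ S, pmul a c = a ∧ floatCount a c = 1) :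
    TwistedVariant ξ S = insert (Finsupp.single (pid n) (1 : K))
      {f | ∃ (i : ℕ), ∃ a ∈ S, a ≠ pid n ∧ f = Finsupp.single a (ξ ^ i)} := by
  refine (twistedVariant_subset hone hsub hmul).antisymm ?_
  rintro _ (rfl | ⟨i, a, ha, hne, rfl⟩)
  · exact single_mem_twistedVariant hone
  · obtain ⟨c, hc, hac, hfloat⟩ := hcap a ha hne
    exact single_pow_mem_twistedVariant ha hc hac hfloat i

end Twisted

/-- Corollary 4.3. Let `S` be `M_n` or `J_n`, `k` a field and
`ξ ∈ k∖{0}`. Then `S^ξ = {1} ∪ {ξ^i·α : i ∈ ℕ, α ∈ S∖{1}}`. -/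
theorem twisted_variant_eq {K : Type} [Field K] (n : ℕ) (S : Set (PElt n))
    (hS : S = Motzkin n ∨ S = Jones n) (ξ : K) (hξ : ξ ≠ 0) :
    TwistedVariant ξ S =
      insert (Finsupp.single (pid n) (1 : K))
        {f | ∃ (i : ℕ), ∃ a ∈ S, a ≠ pid n ∧ f = Finsupp.single a (ξ ^ i)} := by
  rcases hS with rfl | rfl
  · exact twistedVariant_eq_of_exists_cap (jones_subset_motzkin pid_mem_jones) subset_rfl
      (fun _ ha _ hb => pmul_mem_motzkin ha hb) fun _ => exists_cap_mem_motzkin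
  · exact twistedVariant_eq_of_exists_cap pid_mem_jones jones_subset_motzkin
      (fun _ ha _ hb => pmul_mem_jones ha hb) fun _ => exists_cap_mem_jones
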